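/- arXiv:1002.2802 — 3 statements merged into one kernel-verified Lean document; each statement's English description precedes it below -/
import Mathlib

section
/- For abelian groups G₀ and G₁ and a prime p, the torsion product Tor₁^ℤ(G₀, G₁) contains an element of order p if and only if both G₀ and G₁ contain elements of order p. -/
open CategoryTheory

section TensorKernel

open TensorProduct

variable {R M F N : Type*} [CommRing R] [IsDomain R] [IsPrincipalIdealRing R]
  [AddCommGroup M] [Module R M] [AddCommGroup F] [Module R F] [AddCommGroup N] [Module R N]

/-- If `F` is torsion-free and `p` acts injectively on `F ⧸ K`, then the kernel of `M ⊗ K → M ⊗ F`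
has no `p`-torsion. -/
theorem Submodule.eq_zero_of_lTensor_subtype_eq_zero_of_smul_eq_zero [Module.IsTorsionFree R F]
    {K : Submodule R F} {p : R} (h : ∀ f : F, p • f ∈ K → f ∈ K) {t : M ⊗[R] K}
    (ht : K.subtype.lTensor M t = 0) (hpt : p • t = 0) : t = 0 := by
  let φ : K →ₗ[R] F × K := LinearMap.inl R F K ∘ₗ K.subtype + p • LinearMap.inr R F K
  let ψ : F × K →ₗ[R] F := (p • LinearMap.id).coprod (-K.subtype)
  have hφ : Function.Injective φ := fun x y hxy => Subtype.ext (by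
    simpa [φ] using congrArg Prod.fst hxy)
  have hex : Function.Exact φ ψ.rangeRestrict := by
    rintro ⟨f, k⟩
    rw [Subtype.ext_iff]
    constructor
    · intro hfk
      have hk : p • f = k := by simpa [ψ, add_neg_eq_zero] using hfk
      exact ⟨⟨f, h f (hk ▸ k.2)⟩, Prod.ext (by simp [φ]) (Subtype.ext (by simpa [φ] using hk))⟩
    · rintro ⟨x, hx⟩
      simp [ψ, ← hx, φ]
  refine LinearMap.lTensor_injective_of_exact_of_flat ψ.rangeRestrict ψ.surjective_rangeRestrict
    φ hφ hex M ?_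
  simp only [φ, LinearMap.lTensor_add, LinearMap.lTensor_comp, LinearMap.lTensor_smul,
    LinearMap.add_apply, LinearMap.comp_apply, LinearMap.smul_apply, ht, ← map_smul, hpt, map_zero,
    add_zero]

/-- If `x ≠ 0` is killed by a prime `p` and `x ⊗ k = 0` with `k` in a flat module, then `k` is
divisible by `p`. -/
theorem TensorProduct.exists_smul_eq_of_tmul_eq_zero [Module.Flat R F] {p : R} (hp : Prime p)
    {x : M} (hx : x ≠ 0) (hpx : p • x = 0) {k : F} (hxk : x ⊗ₜ[R] k = 0) :
    ∃ k' : F, p • k' = k := by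
  let φ : (R ⧸ Ideal.span {p}) →ₗ[R] M := (Ideal.span {p}).liftQ (LinearMap.toSpanSingleton R M x)
    (by simpa [Ideal.span_le] using hpx)
  have hφ : Function.Injective φ := by
    refine LinearMap.ker_eq_bot.1 (Submodule.ker_liftQ_eq_bot _ _ _ fun c hc => ?_)
    by_contra hcp
    rw [Ideal.mem_span_singleton] at hcp
    obtain ⟨u, v, huv⟩ := (hp.irreducible.coprime_iff_not_dvd).2 hcp
    rw [LinearMap.mem_ker, LinearMap.toSpanSingleton_apply] at hc
    apply hx
    rw [← one_smul R x, ← huv, add_smul, mul_smul, mul_smul, hpx, hc, smul_zero, smul_zero,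
      add_zero]
  have h1 : (1 : R ⧸ Ideal.span {p}) ⊗ₜ[R] k = 0 := by
    refine Module.Flat.rTensor_preserves_injective_linearMap (M := F) φ hφ ?_
    have : φ 1 = x := (Submodule.liftQ_apply _ _ _).trans (one_smul R x)
    rw [LinearMap.rTensor_tmul, this, hxk, map_zero]
  have h2 := congrArg (quotTensorEquivQuotSMul F (Ideal.span {p})) h1
  rw [quotTensorEquivQuotSMul_mk_one_tmul, map_zero, Submodule.Quotient.mk_eq_zero,
    Submodule.ideal_span_singleton_smul, Submodule.mem_smul_pointwise_iff_exists] at h2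
  obtain ⟨k', -, hk'⟩ := h2
  exact ⟨k', hk'⟩

/-- For a presentation `0 → ker q → F → N → 0` with `F` torsion-free over a principal ideal
domain, the kernel of `M ⊗ ker q → M ⊗ F` has `p`-torsion iff both `M` and `N` do. -/
theorem exists_smul_eq_zero_lTensor_subtype_ker_iff [Module.IsTorsionFree R F]
    {q : F →ₗ[R] N} (hq : Function.Surjective q) {p : R} (hp : Prime p) :
    (∃ t : M ⊗[R] (LinearMap.ker q), (LinearMap.ker q).subtype.lTensor M t = 0 ∧
      t ≠ 0 ∧ p • t = 0) ↔
    ((∃ x : M, x ≠ 0 ∧ p • x = 0) ∧ ∃ y : N, y ≠ 0 ∧ p • y = 0) := by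
  constructor
  · rintro ⟨t, hit, ht, hpt⟩
    constructor
    · by_contra! hM
      have hinj : Function.Injective (LinearMap.lsmul R M p) :=
        (injective_iff_map_eq_zero _).2 fun x hx => by_contra fun hx' => hM x hx' hx
      refine ht (Module.Flat.rTensor_preserves_injective_linearMap (M := LinearMap.ker q)
        _ hinj ?_)
      have : (LinearMap.lsmul R M p).rTensor (LinearMap.ker q) = p • LinearMap.id := by
        ext; simp [smul_tmul']
      simp [this, hpt]
    · by_contra! hN
      exact ht <| Submodule.eq_zero_of_lTensor_subtype_eq_zero_of_smul_eq_zero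
        (fun f hf => by_contra fun hf' => hN (q f) hf' (by simpa using hf)) hit hpt
  · rintro ⟨⟨x, hx, hpx⟩, y, hy, hpy⟩
    obtain ⟨f, rfl⟩ := hq y
    let k : LinearMap.ker q := ⟨p • f, by simpa using hpy⟩
    refine ⟨x ⊗ₜ k, ?_, fun hxk => ?_, by rw [smul_tmul', hpx, zero_tmul]⟩
    · rw [LinearMap.lTensor_tmul, Submodule.subtype_apply, ← smul_tmul, hpx, zero_tmul]
    · obtain ⟨k', hk'⟩ := exists_smul_eq_of_tmul_eq_zero hp hx hpx hxk
      have : (k' : F) = f := smul_right_injective F hp.ne_zero (congrArg Subtype.val hk')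
      exact hy (this ▸ k'.2)

end TensorKernel

/-- If `L → F → N` and `E → L → F` are exact, then the homology of `M ⊗ E → M ⊗ L → M ⊗ F` at
`M ⊗ L` is the kernel of `M ⊗ ker q → M ⊗ F`; this compares their elements killed by `r`. -/
theorem LinearMap.exists_smul_mem_range_lTensor_iff {R M E L F N : Type*} [CommRing R]
    [AddCommGroup M] [Module R M] [AddCommGroup E] [Module R E] [AddCommGroup L] [Module R L]
    [AddCommGroup F] [Module R F] [AddCommGroup N] [Module R N]
    {d : E →ₗ[R] L} {e : L →ₗ[R] F} {q : F →ₗ[R] N}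
    (hde : Function.Exact d e) (heq : Function.Exact e q) (r : R) :
    (∃ z : TensorProduct R M L, e.lTensor M z = 0 ∧ z ∉ LinearMap.range (d.lTensor M) ∧
        r • z ∈ LinearMap.range (d.lTensor M)) ↔
      ∃ t : TensorProduct R M (LinearMap.ker q), (LinearMap.ker q).subtype.lTensor M t = 0 ∧
        t ≠ 0 ∧ r • t = 0 := by
  let e' : L →ₗ[R] LinearMap.ker q := e.codRestrict _ heq.apply_apply_eq_zero
  have he' : Function.Surjective e' := fun ⟨f, hf⟩ => by
    obtain ⟨l, rfl⟩ := (heq f).1 hf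
    exact ⟨l, rfl⟩
  have hde' : Function.Exact d e' := fun l => Subtype.ext_iff.trans (hde l)
  have hrange : ∀ z, z ∈ LinearMap.range (d.lTensor M) ↔ e'.lTensor M z = 0 := fun z =>
    ((lTensor_exact M hde' he') z).symm
  have hcomp : ∀ z, e.lTensor M z = (LinearMap.ker q).subtype.lTensor M (e'.lTensor M z) :=
    fun z => by rw [← LinearMap.comp_apply, ← LinearMap.lTensor_comp]; rfl
  simp only [hrange, hcomp, map_smul]
  exact ((LinearMap.lTensor_surjective M he').exists (p := fun t =>
    (LinearMap.ker q).subtype.lTensor M t = 0 ∧ t ≠ 0 ∧ r • t = 0)).symm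

/-- The homology of a short complex of modules has a nonzero element killed by `r` iff there is a
cycle that is not a boundary and whose multiple by `r` is a boundary. -/
theorem CategoryTheory.ShortComplex.exists_homology_smul_eq_zero_iff {R : Type*} [CommRing R]
    (S : ShortComplex (ModuleCat R)) (r : R) :
    (∃ x : S.homology, x ≠ 0 ∧ r • x = 0) ↔
      ∃ z : S.X₂, S.g.hom z = 0 ∧ z ∉ LinearMap.range S.f.hom ∧
        r • z ∈ LinearMap.range S.f.hom := by
  let e := S.moduleCatHomologyIso.toLinearEquiv
  let π : LinearMap.ker S.g.hom →ₗ[R] S.homology :=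
    e.symm.toLinearMap ∘ₗ (LinearMap.range S.moduleCatToCycles).mkQ
  have hπ : Function.Surjective π := e.symm.surjective.comp (Submodule.mkQ_surjective _)
  have hker : ∀ z, π z = 0 ↔ (z : S.X₂) ∈ LinearMap.range S.f.hom := fun z => by
    refine (e.symm.map_eq_zero_iff.trans (Submodule.Quotient.mk_eq_zero _)).trans ?_
    exact exists_congr fun _ => Subtype.ext_iff
  rw [hπ.exists]
  simp only [← map_smul, Ne, hker, Subtype.exists, LinearMap.mem_ker, Submodule.coe_smul, exists_prop]

/-- Elements of `Tor₁` killed by `r`, computed from a projective resolution. -/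
theorem CategoryTheory.ProjectiveResolution.exists_tor_one_smul_eq_zero_iff {R : Type} [CommRing R]
    (M : ModuleCat.{0} R) {N : ModuleCat.{0} R} (P : ProjectiveResolution N) (r : R) :
    (∃ x : ((Tor (ModuleCat R) 1).obj M).obj N, x ≠ 0 ∧ r • x = 0) ↔
      ∃ z : TensorProduct R M (P.complex.X 1), (P.complex.d 1 0).hom.lTensor M z = 0 ∧
        z ∉ LinearMap.range ((P.complex.d 2 1).hom.lTensor M) ∧
        r • z ∈ LinearMap.range ((P.complex.d 2 1).hom.lTensor M) := by
  let T := (MonoidalCategory.tensoringLeft (ModuleCat R)).obj M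
  let C := (T.mapHomologicalComplex _).obj P.complex
  let e : ((Tor (ModuleCat R) 1).obj M).obj N ≃ₗ[R] (C.sc' 2 1 0).homology :=
    (P.isoLeftDerivedObj T 1 ≪≫
      ShortComplex.homologyMapIso (C.isoSc' 2 1 0 (by simp) (by simp))).toLinearEquiv
  rw [e.symm.surjective.exists]
  simp only [← map_smul, Ne, e.symm.map_eq_zero_iff]
  exact (C.sc' 2 1 0).exists_homology_smul_eq_zero_iff r

/-- For abelian groups `G₀`, `G₁` and a prime `p`, the torsion product `Tor₁^ℤ(G₀, G₁)` contains
an element of order `p` iff both `G₀` and `G₁` contain elements of order `p`. -/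
theorem stmt3 (G₀ G₁ : Type) [AddCommGroup G₀] [AddCommGroup G₁] (p : ℕ) (hp : p.Prime) :
    (∃ x : ((Tor (ModuleCat ℤ) 1).obj (ModuleCat.of ℤ G₀)).obj (ModuleCat.of ℤ G₁),
        x ≠ 0 ∧ p • x = 0) ↔
      ((∃ x : G₀, x ≠ 0 ∧ p • x = 0) ∧ (∃ y : G₁, y ≠ 0 ∧ p • y = 0)) := by
  obtain ⟨P⟩ := HasProjectiveResolution.out (Z := ModuleCat.of ℤ G₁)
  have : Module.Projective ℤ (P.complex.X 0) := (IsProjective.iff_projective _).2 (P.projective 0)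
  have : Module.IsTorsionFree ℤ (P.complex.X 0) :=
    Submodule.isTorsionFree_iff_torsion_eq_bot.2 Module.Flat.torsion_eq_bot
  have h₁ := (ShortComplex.ShortExact.moduleCat_exact_iff_function_exact _).1 (P.exact_succ 0)
  have h₀ := (ShortComplex.ShortExact.moduleCat_exact_iff_function_exact _).1 P.exact₀
  have hπ : Function.Surjective (P.π.f 0).hom :=
    (ModuleCat.epi_iff_surjective _).1 inferInstance
  have h := (P.exists_tor_one_smul_eq_zero_iff (ModuleCat.of ℤ G₀) (p : ℤ)).trans <|
    (LinearMap.exists_smul_mem_range_lTensor_iff h₁ h₀ (p : ℤ)).trans <|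
    exists_smul_eq_zero_lTensor_subtype_ker_iff hπ (Nat.prime_iff_prime_int.1 hp)
  simp only [Nat.cast_smul_eq_nsmul] at h
  exact h
end

section
/- For abelian groups G and H, the tensor product G ⊗ H is trivial if and only if G ⊗ B is trivial for every group B in the Bockstein family σ(H). -/
open TensorProduct

/-- The `p`-torsion part of an abelian group. -/
def pTorsion (p : ℕ) (G : Type) [AddCommGroup G] : AddSubgroup G where
  carrier := {x | ∃ k : ℕ, p ^ k • x = 0}
  zero_mem' := ⟨0, smul_zero _⟩
  add_mem' := by
    rintro a b ⟨k, hk⟩ ⟨l, hl⟩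
    refine ⟨k + l, ?_⟩
    have ha : p ^ (k + l) • a = 0 := by
      rw [pow_add, mul_nsmul, hk, smul_zero]
    have hb : p ^ (k + l) • b = 0 := by
      rw [pow_add, mul_comm, mul_nsmul, hl, smul_zero]
    rw [smul_add, ha, hb, add_zero]
  neg_mem' := by
    rintro a ⟨k, hk⟩
    exact ⟨k, by rw [smul_neg, hk, neg_zero]⟩

/-- An abelian group is divisible by `n` if every element is an `n`-th multiple. -/
def DivisibleByNat (H : Type) [AddCommGroup H] (n : ℕ) : Prop :=
  ∀ x : H, ∃ y : H, n • y = x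

/-- `ℚ ∈ σ(G)` iff `G/Tor(G)` is nonzero and divisible. -/
def QInSigma (G : Type) [AddCommGroup G] : Prop :=
  Nontrivial (G ⧸ AddCommGroup.torsion G) ∧
    ∀ n : ℕ, 0 < n → DivisibleByNat (G ⧸ AddCommGroup.torsion G) n

/-- `R_p ∈ σ(G)` iff `G/p-Tor(G)` is not divisible by `p`. -/
def RpInSigma (G : Type) [AddCommGroup G] (p : ℕ) : Prop :=
  ¬ DivisibleByNat (G ⧸ pTorsion p G) p

/-- `ℤ_p ∈ σ(G)` iff `p-Tor(G)` is not divisible by `p`. -/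
def ZpInSigma (G : Type) [AddCommGroup G] (p : ℕ) : Prop :=
  ¬ DivisibleByNat (pTorsion p G) p

/-- `ℚ_p ∈ σ(G)` iff `p-Tor(G)` is nonzero and divisible by `p`. -/
def QpInSigma (G : Type) [AddCommGroup G] (p : ℕ) : Prop :=
  Nontrivial (pTorsion p G) ∧ DivisibleByNat (pTorsion p G) p

/-- The subgroup `R_p ⊆ ℚ` of rationals whose denominator is not divisible by `p`
(i.e. rationals `a/b` with `b` coprime to `p`). -/
def RpGroup (p : ℕ) : AddSubgroup ℚ where
  carrier := {q | ∃ a b : ℤ, IsCoprime b (p : ℤ) ∧ (b : ℚ) * q = (a : ℚ)}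
  zero_mem' := ⟨0, 1, isCoprime_one_left, by simp⟩
  add_mem' := by
    rintro x y ⟨a₁, b₁, h₁, e₁⟩ ⟨a₂, b₂, h₂, e₂⟩
    refine ⟨a₁ * b₂ + a₂ * b₁, b₁ * b₂, h₁.mul_left h₂, ?_⟩
    push_cast
    linear_combination (b₂ : ℚ) * e₁ + (b₁ : ℚ) * e₂
  neg_mem' := by
    rintro x ⟨a, b, h, e⟩
    exact ⟨-a, b, h, by push_cast; linear_combination -e⟩

lemma subsingleton_tensor_of_tmul_eq_zero {A B : Type} [AddCommGroup A] [AddCommGroup B]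
    (h : ∀ (a : A) (b : B), a ⊗ₜ[ℤ] b = 0) : Subsingleton (A ⊗[ℤ] B) := by
  refine subsingleton_of_forall_eq 0 fun z => ?_
  induction z with
  | zero => rfl
  | tmul a b => exact h a b
  | add x y hx hy => rw [hx, hy, add_zero]

lemma subsingleton_tensor_comm {A B : Type} [AddCommGroup A] [AddCommGroup B]
    (h : Subsingleton (A ⊗[ℤ] B)) : Subsingleton (B ⊗[ℤ] A) :=
  (TensorProduct.comm ℤ B A).toEquiv.subsingleton

lemma subsingleton_tensor_quotient {A B : Type} [AddCommGroup A] [AddCommGroup B]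
    (N : AddSubgroup B) (h : Subsingleton (A ⊗[ℤ] B)) : Subsingleton (A ⊗[ℤ] (B ⧸ N)) :=
  (LinearMap.lTensor_surjective A (g := (QuotientAddGroup.mk' N).toIntLinearMap)
    (QuotientAddGroup.mk'_surjective N)).subsingleton

lemma nsmul_tmul_comm {A B : Type} [AddCommGroup A] [AddCommGroup B] (n : ℕ) (a : A) (b : B) :
    (n • a) ⊗ₜ[ℤ] b = a ⊗ₜ[ℤ] (n • b) := by
  rw [← natCast_zsmul, ← natCast_zsmul, TensorProduct.smul_tmul]

lemma exists_hom_zmod_ne_zero_of_nsmul_eq_zero {V : Type} [AddCommGroup V] (p : ℕ)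
    [Fact p.Prime] (hV : ∀ v : V, p • v = 0) {v : V} (hv : v ≠ 0) :
    ∃ f : V →+ ZMod p, f v ≠ 0 := by
  have : Module (ZMod p) V := AddCommGroup.zmodModule hV
  by_contra! hf
  exact hv ((Module.forall_dual_apply_eq_zero_iff (ZMod p) v).1 fun φ => hf φ.toAddMonoidHom)

/-- An element outside `pA` is detected by a homomorphism to `ℤ/p`. -/
lemma exists_hom_zmod_ne_zero {A : Type} [AddCommGroup A] (p : ℕ) [Fact p.Prime] {a : A}
    (ha : ¬ ∃ b : A, p • b = a) : ∃ f : A →+ ZMod p, f a ≠ 0 := by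
  let N : AddSubgroup A := (nsmulAddMonoidHom (α := A) p).range
  have hN (x : A ⧸ N) : p • x = 0 := by
    obtain ⟨x, rfl⟩ := QuotientAddGroup.mk_surjective x
    rw [← QuotientAddGroup.mk_nsmul, QuotientAddGroup.eq_zero_iff]
    exact ⟨x, rfl⟩
  obtain ⟨f, hf⟩ := exists_hom_zmod_ne_zero_of_nsmul_eq_zero p hN
    (v := QuotientAddGroup.mk a) fun h => ha ((QuotientAddGroup.eq_zero_iff a).1 h)
  exact ⟨f.comp (QuotientAddGroup.mk' N), hf⟩

/-- The tensor product of two groups which are not `p`-divisible is nontrivial. -/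
lemma divisibleByNat_or_of_subsingleton_tensor {A B : Type} [AddCommGroup A] [AddCommGroup B]
    {p : ℕ} (hp : p.Prime) (h : Subsingleton (A ⊗[ℤ] B)) :
    DivisibleByNat A p ∨ DivisibleByNat B p := by
  have : Fact p.Prime := ⟨hp⟩
  by_contra! hAB
  simp only [DivisibleByNat, not_forall] at hAB
  obtain ⟨⟨a, ha⟩, ⟨b, hb⟩⟩ := hAB
  obtain ⟨f, hf⟩ := exists_hom_zmod_ne_zero p ha
  obtain ⟨g, hg⟩ := exists_hom_zmod_ne_zero p hb
  have key : LinearMap.mul' ℤ (ZMod p)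
      (TensorProduct.map f.toIntLinearMap g.toIntLinearMap (a ⊗ₜ[ℤ] b)) = f a * g b := by
    simp
  rw [Subsingleton.elim (a ⊗ₜ[ℤ] b) 0, map_zero, map_zero] at key
  exact mul_ne_zero hf hg key.symm

lemma divisibleByNat_of_subsingleton_tensor_zmod {A : Type} [AddCommGroup A] {p : ℕ}
    (hp : p.Prime) (h : Subsingleton (A ⊗[ℤ] ZMod p)) : DivisibleByNat A p := by
  have : Fact p.Prime := ⟨hp⟩
  refine (divisibleByNat_or_of_subsingleton_tensor hp h).resolve_right fun hd => ?_
  obtain ⟨y, hy⟩ := hd 1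
  simp at hy

/-- If `K` is torsion-free and `A ⊗ K = 0` for some `A` with an element of order `p`, then `K` is
`p`-divisible. -/
lemma divisibleByNat_of_tensor_of_prime_torsion {A K : Type} [AddCommGroup A] [AddCommGroup K]
    [IsAddTorsionFree K] {p : ℕ} (hp : p.Prime) (h : Subsingleton (A ⊗[ℤ] K)) {a : A}
    (ha : a ≠ 0) (hpa : p • a = 0) : DivisibleByNat K p := by
  have : Fact p.Prime := ⟨hp⟩
  let f : ZMod p →+ A := ZMod.lift p ⟨zmultiplesHom A a, by simpa using hpa⟩
  have hf : Function.Injective f := by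
    rw [injective_iff_map_eq_zero]
    intro x hx
    obtain ⟨n, rfl⟩ := ZMod.intCast_surjective x
    have hn : n • a = 0 := by simpa [f] using hx
    rw [ZMod.intCast_zmod_eq_zero_iff_dvd, ← addOrderOf_eq_prime hpa ha]
    exact addOrderOf_dvd_iff_zsmul_eq_zero.2 hn
  exact divisibleByNat_of_subsingleton_tensor_zmod hp <| subsingleton_tensor_comm
    (Module.Flat.rTensor_preserves_injective_linearMap (M := K) f.toIntLinearMap hf).subsingleton

/-- If `K` is torsion-free and nontrivial and `A ⊗ K = 0`, then `A` is a torsion group. -/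
lemma isOfFinAddOrder_of_subsingleton_tensor {A K : Type} [AddCommGroup A] [AddCommGroup K]
    [IsAddTorsionFree K] [Nontrivial K] (h : Subsingleton (A ⊗[ℤ] K)) (a : A) :
    IsOfFinAddOrder a := by
  by_contra ha
  have hf : Function.Injective (LinearMap.toSpanSingleton ℤ A a) :=
    injective_zsmul_iff_not_isOfFinAddOrder.2 ha
  have := (Module.Flat.rTensor_preserves_injective_linearMap (M := K) _ hf).subsingleton
  exact not_subsingleton K (TensorProduct.lid ℤ K).symm.toEquiv.subsingleton

lemma eq_zero_of_mem_pTorsion {A : Type} [AddCommGroup A] {p : ℕ}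
    (h : ∀ a : A, p • a = 0 → a = 0) {a : A} (ha : a ∈ pTorsion p A) : a = 0 := by
  obtain ⟨k, hk⟩ := ha
  induction k with
  | zero => simpa using hk
  | succ k ih => exact ih (h _ (by rw [smul_smul, ← pow_succ', hk]))

lemma divisibleByNat_quotient_iff {A : Type} [AddCommGroup A] (N : AddSubgroup A) (n : ℕ) :
    DivisibleByNat (A ⧸ N) n ↔ ∀ a : A, ∃ b : A, a - n • b ∈ N := by
  simp only [DivisibleByNat, QuotientAddGroup.forall_mk]
  refine forall_congr' fun a => ?_
  rw [QuotientAddGroup.mk_surjective.exists]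
  refine exists_congr fun b => ?_
  rw [← QuotientAddGroup.mk_nsmul, QuotientAddGroup.eq, neg_add_eq_sub]

lemma exists_sub_pow_nsmul_mem_of_divisible {A : Type} [AddCommGroup A] {N : AddSubgroup A}
    {p : ℕ} (h : DivisibleByNat (A ⧸ N) p) (k : ℕ) (a : A) : ∃ b : A, a - p ^ k • b ∈ N := by
  rw [divisibleByNat_quotient_iff] at h
  induction k with
  | zero => exact ⟨a, by simp⟩
  | succ k ih =>
    obtain ⟨b, hb⟩ := ih
    obtain ⟨c, hc⟩ := h b
    refine ⟨c, ?_⟩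
    have : a - p ^ (k + 1) • c = (a - p ^ k • b) + p ^ k • (b - p • c) := by
      rw [smul_sub, smul_smul, ← pow_succ]; abel
    rw [this]
    exact N.add_mem hb (N.nsmul_mem hc _)

lemma exists_pow_nsmul_eq_of_divisible {A : Type} [AddCommGroup A] {p : ℕ}
    (h : DivisibleByNat A p) (k : ℕ) (a : A) : ∃ b : A, p ^ k • b = a := by
  induction k with
  | zero => exact ⟨a, by simp⟩
  | succ k ih =>
    obtain ⟨b, hb⟩ := ih
    obtain ⟨c, hc⟩ := h b
    exact ⟨c, by rw [pow_succ, mul_smul, hc, hb]⟩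

lemma pTorsion_le_torsion {A : Type} [AddCommGroup A] {p : ℕ} (hp : p.Prime) :
    pTorsion p A ≤ AddCommGroup.torsion A := fun _ ⟨k, hk⟩ =>
  isOfFinAddOrder_iff_nsmul_eq_zero.2 ⟨p ^ k, pow_pos hp.pos k, hk⟩

/-- A torsion element becomes `p`-torsion after multiplication by some integer prime to `p`. -/
lemma exists_coprime_nsmul_mem_pTorsion {A : Type} [AddCommGroup A] {p : ℕ} (hp : p.Prime)
    {a : A} (ha : IsOfFinAddOrder a) : ∃ m : ℕ, p.Coprime m ∧ m • a ∈ pTorsion p A := by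
  obtain ⟨n, hn, hna⟩ := isOfFinAddOrder_iff_nsmul_eq_zero.1 ha
  obtain ⟨k, m, hm, rfl⟩ := Nat.exists_eq_pow_mul_and_not_dvd hn.ne' p hp.ne_one
  exact ⟨m, (hp.coprime_iff_not_dvd).2 hm, k, by rw [smul_smul, hna]⟩

lemma divisibleByNat_quotient_torsion_iff {A : Type} [AddCommGroup A] {p : ℕ} (hp : p.Prime) :
    DivisibleByNat (A ⧸ AddCommGroup.torsion A) p ↔ DivisibleByNat (A ⧸ pTorsion p A) p := by
  simp only [divisibleByNat_quotient_iff]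
  refine ⟨fun h a => ?_, fun h a => (h a).imp fun b hb => pTorsion_le_torsion hp hb⟩
  obtain ⟨b, hb⟩ := h a
  obtain ⟨m, hm, hmt⟩ := exists_coprime_nsmul_mem_pTorsion hp hb
  obtain ⟨u, v, huv⟩ := Nat.isCoprime_iff_coprime.2 hm
  refine ⟨b + u • (a - p • b), ?_⟩
  have : a - p • (b + u • (a - p • b)) = v • (m • (a - p • b)) := by
    set t := a - p • b with ht
    have h1 : t = (u * p + v * m : ℤ) • t := by rw [huv, one_smul]
    rw [smul_add, ← sub_sub, ← ht]
    nth_rewrite 1 [h1]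
    module
  rw [this]
  exact (pTorsion p A).zsmul_mem hmt v

/-- `a ⊗ t` vanishes for `p`-torsion `t` if `A` modulo `p`-torsion and the `p`-torsion of `B` are
both `p`-divisible. -/
lemma tmul_eq_zero_of_divisible {A B : Type} [AddCommGroup A] [AddCommGroup B] {p : ℕ}
    (hA : DivisibleByNat (A ⧸ pTorsion p A) p) (hB : DivisibleByNat (pTorsion p B) p)
    (a : A) {t : B} (ht : t ∈ pTorsion p B) : a ⊗ₜ[ℤ] t = 0 := by
  obtain ⟨k, hk⟩ := id ht
  obtain ⟨b, m, hm⟩ := exists_sub_pow_nsmul_mem_of_divisible hA k a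
  obtain ⟨⟨s, _⟩, hs⟩ := exists_pow_nsmul_eq_of_divisible hB m ⟨t, ht⟩
  have hs' : p ^ m • s = t := congrArg Subtype.val hs
  have h1 : (a - p ^ k • b) ⊗ₜ[ℤ] t = 0 := by
    rw [← hs', ← nsmul_tmul_comm, hm, TensorProduct.zero_tmul]
  rw [TensorProduct.sub_tmul, nsmul_tmul_comm, hk, TensorProduct.tmul_zero, sub_zero] at h1
  exact h1

lemma divisibleByNat_pTorsion {A : Type} [AddCommGroup A] {p : ℕ} (h : DivisibleByNat A p) :
    DivisibleByNat (pTorsion p A) p := by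
  rintro ⟨a, k, hk⟩
  obtain ⟨b, rfl⟩ := h a
  exact ⟨⟨b, k + 1, by rw [pow_succ, mul_smul, hk]⟩, rfl⟩

lemma DivisibleByNat.quotient {A : Type} [AddCommGroup A] {n : ℕ} (h : DivisibleByNat A n)
    (N : AddSubgroup A) : DivisibleByNat (A ⧸ N) n := by
  rw [divisibleByNat_quotient_iff]
  intro a
  obtain ⟨b, rfl⟩ := h a
  exact ⟨b, by simp⟩

/-- If `K` is torsion-free, not `p`-divisible and `A ⊗ K = 0`, then `A` is torsion without
`p`-torsion. -/
lemma torsion_and_pTorsion_free_of_not_divisible {A K : Type} [AddCommGroup A] [AddCommGroup K]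
    [IsAddTorsionFree K] {p : ℕ} (hp : p.Prime) (hK : ¬ DivisibleByNat K p)
    (h : Subsingleton (A ⊗[ℤ] K)) :
    (∀ a : A, IsOfFinAddOrder a) ∧ ∀ a ∈ pTorsion p A, a = 0 := by
  have : Nontrivial K := by
    by_contra hn
    rw [not_nontrivial_iff_subsingleton] at hn
    exact hK fun x => ⟨0, Subsingleton.elim _ _⟩
  refine ⟨isOfFinAddOrder_of_subsingleton_tensor h, fun a ha => ?_⟩
  refine eq_zero_of_mem_pTorsion (fun a ha => ?_) ha
  by_contra h0
  exact hK (divisibleByNat_of_tensor_of_prime_torsion hp h h0 ha)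

lemma inv_notMem_RpGroup {p : ℕ} (hp : p.Prime) : (p : ℚ)⁻¹ ∉ RpGroup p := by
  rintro ⟨a, b, hb, h⟩
  have hp0 : (p : ℚ) ≠ 0 := Nat.cast_ne_zero.2 hp.ne_zero
  rw [mul_inv_eq_iff_eq_mul₀ hp0] at h
  have h' : b = a * p := by exact_mod_cast h
  have hu : IsUnit (p : ℤ) := hb.isUnit_of_dvd' ⟨a, by rw [h', mul_comm]⟩ dvd_rfl
  exact hp.ne_one (by simpa using Int.isUnit_iff_natAbs_eq.1 hu)

lemma one_mem_RpGroup (p : ℕ) : (1 : ℚ) ∈ RpGroup p :=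
  ⟨1, 1, isCoprime_one_left, by simp⟩

instance (p : ℕ) : IsAddTorsionFree (RpGroup p) :=
  Function.Injective.isAddTorsionFree (RpGroup p).subtype Subtype.val_injective

lemma not_divisibleByNat_RpGroup {p : ℕ} (hp : p.Prime) : ¬ DivisibleByNat (RpGroup p) p := by
  intro h
  obtain ⟨⟨y, hy⟩, hy'⟩ := h ⟨1, one_mem_RpGroup p⟩
  have h1 : p • y = 1 := congrArg Subtype.val hy'
  rw [nsmul_eq_mul] at h1
  exact inv_notMem_RpGroup hp (eq_inv_of_mul_eq_one_right h1 ▸ hy)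

/-- Every element of `R_p` is divisible by each integer prime to `p`. -/
lemma exists_nsmul_eq_RpGroup {p m : ℕ} (hp : p.Prime) (hm : p.Coprime m) (r : RpGroup p) :
    ∃ s : RpGroup p, m • s = r := by
  obtain ⟨q, a, b, hb, h⟩ := r
  have hm0 : (m : ℚ) ≠ 0 := by
    rintro h0
    rw [Nat.cast_eq_zero.1 h0, Nat.coprime_zero_right] at hm
    exact hp.ne_one hm
  refine ⟨⟨q / m, a, b * m, hb.mul_left (Nat.isCoprime_iff_coprime.2 hm.symm), ?_⟩, ?_⟩
  · rw [← h]; push_cast; field_simp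
  · ext
    change m • (q / m) = q
    rw [nsmul_eq_mul]; field_simp

/-- The quotient `ℚ / R_p` is a `p`-group. -/
lemma mem_pTorsion_quotient_RpGroup {p : ℕ} (hp : p.Prime) (x : ℚ ⧸ RpGroup p) :
    x ∈ pTorsion p (ℚ ⧸ RpGroup p) := by
  induction x using QuotientAddGroup.induction_on with
  | H q =>
    obtain ⟨k, m, hm, hkm⟩ := Nat.exists_eq_pow_mul_and_not_dvd q.den_ne_zero p hp.ne_one
    refine ⟨k, ?_⟩
    rw [← QuotientAddGroup.mk_nsmul, QuotientAddGroup.eq_zero_iff]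
    refine ⟨q.num, m, Nat.isCoprime_iff_coprime.2 ((hp.coprime_iff_not_dvd).2 hm).symm, ?_⟩
    rw [← Rat.mul_den_eq_num q, hkm, nsmul_eq_mul]
    push_cast
    ring

lemma divisibleByNat_rat {n : ℕ} (hn : n ≠ 0) : DivisibleByNat ℚ n := fun q =>
  ⟨q / n, by rw [nsmul_eq_mul, mul_div_cancel₀ q (Nat.cast_ne_zero.2 hn)]⟩

lemma subsingleton_tensor_rat {A : Type} [AddCommGroup A] (h : ∀ a : A, IsOfFinAddOrder a) :
    Subsingleton (A ⊗[ℤ] ℚ) := by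
  refine subsingleton_tensor_of_tmul_eq_zero fun a q => ?_
  obtain ⟨n, hn, hna⟩ := isOfFinAddOrder_iff_nsmul_eq_zero.1 (h a)
  obtain ⟨r, rfl⟩ := divisibleByNat_rat hn.ne' q
  rw [← nsmul_tmul_comm, hna, TensorProduct.zero_tmul]

lemma subsingleton_tensor_zmod {A : Type} [AddCommGroup A] {p : ℕ} (h : DivisibleByNat A p) :
    Subsingleton (A ⊗[ℤ] ZMod p) := by
  refine subsingleton_tensor_of_tmul_eq_zero fun a x => ?_
  obtain ⟨b, rfl⟩ := h a
  rw [nsmul_tmul_comm, nsmul_eq_mul, CharP.cast_eq_zero, zero_mul, TensorProduct.tmul_zero]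

lemma subsingleton_tensor_quotient_RpGroup_iff {A : Type} [AddCommGroup A] {p : ℕ}
    (hp : p.Prime) :
    Subsingleton (A ⊗[ℤ] (ℚ ⧸ RpGroup p)) ↔ DivisibleByNat (A ⧸ pTorsion p A) p := by
  constructor
  · intro h
    rw [← divisibleByNat_quotient_torsion_iff hp]
    refine divisibleByNat_of_tensor_of_prime_torsion hp
      (subsingleton_tensor_quotient _ (subsingleton_tensor_comm h))
      (a := QuotientAddGroup.mk (p : ℚ)⁻¹) ?_ ?_
    · rw [Ne, QuotientAddGroup.eq_zero_iff]
      exact inv_notMem_RpGroup hp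
    · rw [← QuotientAddGroup.mk_nsmul, QuotientAddGroup.eq_zero_iff, nsmul_eq_mul,
        mul_inv_cancel₀ (Nat.cast_ne_zero.2 hp.ne_zero)]
      exact one_mem_RpGroup p
  · intro h
    exact subsingleton_tensor_of_tmul_eq_zero fun a x => tmul_eq_zero_of_divisible h
      (divisibleByNat_pTorsion ((divisibleByNat_rat hp.ne_zero).quotient _)) a
      (mem_pTorsion_quotient_RpGroup hp x)

lemma subsingleton_tensor_RpGroup_iff {A : Type} [AddCommGroup A] {p : ℕ} (hp : p.Prime) :
    Subsingleton (A ⊗[ℤ] RpGroup p) ↔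
      (∀ a : A, IsOfFinAddOrder a) ∧ ∀ a ∈ pTorsion p A, a = 0 := by
  refine ⟨torsion_and_pTorsion_free_of_not_divisible hp (not_divisibleByNat_RpGroup hp),
    fun ⟨htor, hfree⟩ => subsingleton_tensor_of_tmul_eq_zero fun a r => ?_⟩
  obtain ⟨m, hm, hma⟩ := exists_coprime_nsmul_mem_pTorsion hp (htor a)
  obtain ⟨s, rfl⟩ := exists_nsmul_eq_RpGroup hp hm r
  rw [← nsmul_tmul_comm, hfree _ hma, TensorProduct.zero_tmul]

/-- A subgroup containing all `p`-torsion for all primes `p` contains all torsion. -/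
lemma mem_of_isOfFinAddOrder_of_pTorsion_le {A : Type} [AddCommGroup A] (N : AddSubgroup A)
    (h : ∀ p : ℕ, p.Prime → pTorsion p A ≤ N) {a : A} (ha : IsOfFinAddOrder a) : a ∈ N := by
  obtain ⟨n, hn, hna⟩ := isOfFinAddOrder_iff_nsmul_eq_zero.1 ha
  induction n using Nat.recOnPosPrimePosCoprime generalizing a with
  | zero => exact absurd hn (lt_irrefl 0)
  | one => rw [one_smul] at hna; exact hna ▸ N.zero_mem
  | prime_pow p k hp _ => exact h p hp ⟨k, hna⟩
  | coprime m n hm hn' hmn ihm ihn =>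
    obtain ⟨u, v, huv⟩ := Nat.isCoprime_iff_coprime.2 hmn
    have key : a = u • (m • a) + v • (n • a) := by
      conv_lhs => rw [← one_smul ℤ a, ← huv]
      module
    have h1 : n • m • a = 0 := by rw [smul_smul, mul_comm, hna]
    have h2 : m • n • a = 0 := by rw [smul_smul, hna]
    rw [key]
    exact N.add_mem (N.zsmul_mem (ihn ha.nsmul (by lia) h1) u)
      (N.zsmul_mem (ihm ha.nsmul (by lia) h2) v)

/-- `G ⊗ H` is trivial iff `G ⊗ B` is trivial for every member `B` of the Bockstein family
`σ(H) ⊆ {ℚ, ℤ_p, ℚ_p, R_p : p prime}`. -/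
theorem stmt11 (G H : Type) [AddCommGroup G] [AddCommGroup H] :
    Subsingleton (G ⊗[ℤ] H) ↔
      ((QInSigma H → Subsingleton (G ⊗[ℤ] ℚ)) ∧
       (∀ p : ℕ, p.Prime → ZpInSigma H p → Subsingleton (G ⊗[ℤ] ZMod p)) ∧
       (∀ p : ℕ, p.Prime → QpInSigma H p → Subsingleton (G ⊗[ℤ] (ℚ ⧸ RpGroup p))) ∧
       (∀ p : ℕ, p.Prime → RpInSigma H p → Subsingleton (G ⊗[ℤ] ↥(RpGroup p)))) := by
  constructor
  · intro h
    refine ⟨fun ⟨_, _⟩ => ?_, fun p hp hH => ?_, fun p hp ⟨hne, _⟩ => ?_, fun p hp hH => ?_⟩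
    · exact subsingleton_tensor_rat
        (isOfFinAddOrder_of_subsingleton_tensor
        (subsingleton_tensor_quotient (AddCommGroup.torsion H) h))
    · exact subsingleton_tensor_zmod ((divisibleByNat_or_of_subsingleton_tensor hp h).resolve_right
        fun hd => hH (divisibleByNat_pTorsion hd))
    · rw [subsingleton_tensor_quotient_RpGroup_iff hp, ← divisibleByNat_quotient_torsion_iff hp]
      by_contra hG
      obtain ⟨⟨t, ht⟩, ht0⟩ := exists_ne (0 : pTorsion p H)
      exact ht0 (Subtype.ext ((torsion_and_pTorsion_free_of_not_divisible hp hG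
        (subsingleton_tensor_quotient _ (subsingleton_tensor_comm h))).2 t ht))
    · rw [RpInSigma, ← divisibleByNat_quotient_torsion_iff hp] at hH
      rw [subsingleton_tensor_RpGroup_iff hp]
      exact torsion_and_pTorsion_free_of_not_divisible hp hH (subsingleton_tensor_quotient _ h)
  · rintro ⟨hQ, hZp, hQp, hRp⟩
    have hpt : ∀ p : ℕ, p.Prime → ∀ g : G, ∀ t ∈ pTorsion p H, g ⊗ₜ[ℤ] t = 0 := by
      intro p hp g t ht
      by_cases hdiv : DivisibleByNat (pTorsion p H) p
      · rcases subsingleton_or_nontrivial (pTorsion p H) with hs | hn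
        · have : t = 0 := congrArg Subtype.val (Subsingleton.elim (⟨t, ht⟩ : pTorsion p H) 0)
          rw [this, TensorProduct.tmul_zero]
        · exact tmul_eq_zero_of_divisible
            ((subsingleton_tensor_quotient_RpGroup_iff hp).1 (hQp p hp ⟨hn, hdiv⟩)) hdiv g ht
      · obtain ⟨k, hk⟩ := ht
        obtain ⟨g', rfl⟩ := exists_pow_nsmul_eq_of_divisible
          (divisibleByNat_of_subsingleton_tensor_zmod hp (hZp p hp hdiv)) k g
        rw [nsmul_tmul_comm, hk, TensorProduct.tmul_zero]
    refine subsingleton_tensor_of_tmul_eq_zero fun g h => ?_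
    by_cases hH : ∀ x : H, IsOfFinAddOrder x
    · exact mem_of_isOfFinAddOrder_of_pTorsion_le (TensorProduct.mk ℤ G H g).toAddMonoidHom.ker
        (fun p hp t ht => hpt p hp g t ht) (hH h)
    · have hG : ∀ x : G, IsOfFinAddOrder x := by
        by_cases hd : ∀ p : ℕ, p.Prime → DivisibleByNat (H ⧸ AddCommGroup.torsion H) p
        · refine isOfFinAddOrder_of_subsingleton_tensor (hQ ⟨?_, fun n hn => ?_⟩)
          · obtain ⟨x, hx⟩ := not_forall.1 hH
            exact ⟨QuotientAddGroup.mk x, 0, fun h0 => hx ((QuotientAddGroup.eq_zero_iff x).1 h0)⟩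
          · induction n using Nat.recOnMul with
            | zero => exact absurd hn (lt_irrefl 0)
            | one => exact fun x => ⟨x, one_smul ℕ x⟩
            | prime p hp => exact hd p hp
            | mul a b iha ihb =>
              intro x
              obtain ⟨y, rfl⟩ := iha (Nat.pos_of_mul_pos_right hn) x
              obtain ⟨z, rfl⟩ := ihb (Nat.pos_of_mul_pos_left hn) y
              exact ⟨z, mul_smul a b z⟩
        · push Not at hd
          obtain ⟨p, hp, hnd⟩ := hd
          rw [divisibleByNat_quotient_torsion_iff hp] at hnd
          exact ((subsingleton_tensor_RpGroup_iff hp).1 (hRp p hp hnd)).1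
      refine mem_of_isOfFinAddOrder_of_pTorsion_le
        ((TensorProduct.mk ℤ G H).flip h).toAddMonoidHom.ker (fun p hp t ht => ?_) (hG g)
      change t ⊗ₜ[ℤ] h = 0
      by_cases hR : RpInSigma H p
      · rw [((subsingleton_tensor_RpGroup_iff hp).1 (hRp p hp hR)).2 t ht,
          TensorProduct.zero_tmul]
      · obtain ⟨k, hk⟩ := ht
        obtain ⟨h', hh'⟩ := exists_sub_pow_nsmul_mem_of_divisible (not_not.1 hR) k h
        have h1 := hpt p hp t _ hh'
        rwa [TensorProduct.tmul_sub, ← nsmul_tmul_comm, hk, TensorProduct.zero_tmul,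
          sub_zero] at h1
end

section
/- Let A ⊆ X, B ⊆ Y be homotopical Z_n- and Z_m-sets, respectively, in Tychonov spaces X and Y. Then A × B is a homotopical Z_{n+m+1}-set in X × Y. -/
open unitInterval

/-- `A` is a homotopical `Z_n`-set in `X`: `A` is closed and for every open cover `𝒰` of `X`
and every map `f : [0,1]^n → X` there is a map `f' : [0,1]^n → X \ A` which is
`𝒰`-homotopic to `f`. -/
def IsHomotopicalZSet {X : Type} [TopologicalSpace X] (n : ℕ) (A : Set X) : Prop :=
  IsClosed A ∧ ∀ 𝒰 : Set (Set X), (∀ U ∈ 𝒰, IsOpen U) → ⋃₀ 𝒰 = Set.univ →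
    ∀ f : C((Fin n → unitInterval), X), ∃ f' : C((Fin n → unitInterval), X),
      (∀ z, f' z ∉ A) ∧
      ∃ H : f.Homotopy f', ∀ z, ∃ U ∈ 𝒰, ∀ t : unitInterval, H (t, z) ∈ U

open scoped Uniformity SetRel

/-- `f` and `g` are joined by a homotopy whose tracks start `V`-close to all their points. -/
def EntourageHomotopic {Z X : Type*} [TopologicalSpace Z] [TopologicalSpace X]
    (V : Set (X × X)) (f g : C(Z, X)) : Prop :=
  ∃ H : f.Homotopy g, ∀ t z, (f z, H (t, z)) ∈ V

/-- Every map `Z → X` can be pushed off `A` on the subset `K` by an arbitrarily small homotopy. -/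
def CanAvoidOn {Z X : Type*} [TopologicalSpace Z] [UniformSpace X] (A : Set X) (K : Set Z) : Prop :=
  ∀ f : C(Z, X), ∀ V ∈ 𝓤 X, ∃ g, EntourageHomotopic V f g ∧ ∀ z ∈ K, g z ∉ A

namespace EntourageHomotopic

variable {Z X : Type*} [TopologicalSpace Z] [UniformSpace X] {f g h : C(Z, X)} {V W : Set (X × X)}

theorem refl (hV : V ∈ 𝓤 X) (f : C(Z, X)) : EntourageHomotopic V f f :=
  ⟨.refl f, fun _ _ => refl_mem_uniformity hV⟩

theorem mono (H : EntourageHomotopic V f g) (h : V ⊆ W) : EntourageHomotopic W f g :=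
  H.imp fun _ hF t z => h (hF t z)

theorem mem (H : EntourageHomotopic V f g) (z : Z) : (f z, g z) ∈ V := by
  obtain ⟨F, hF⟩ := H
  simpa using hF 1 z

theorem trans (H₁ : EntourageHomotopic V f g) (H₂ : EntourageHomotopic W g h) (hW : W ∈ 𝓤 X) :
    EntourageHomotopic (V ○ W) f h := by
  have hmem := H₁.mem
  obtain ⟨F, hF⟩ := H₁
  obtain ⟨G, hG⟩ := H₂
  refine ⟨F.trans G, fun t z => ?_⟩
  rw [ContinuousMap.Homotopy.trans_apply]
  split_ifs
  · exact ⟨_, hF _ z, refl_mem_uniformity hW⟩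
  · exact ⟨_, hmem z, hG _ z⟩

theorem comp_right {Z' : Type*} [TopologicalSpace Z'] (H : EntourageHomotopic V f g)
    (k : C(Z', Z)) : EntourageHomotopic V (f.comp k) (g.comp k) := by
  obtain ⟨F, hF⟩ := H
  exact ⟨F.compContinuousMap k, fun t z => hF t (k z)⟩

end EntourageHomotopic

/-- The straight-line segment from `p` to `q` in a cube. -/
def cubeSegment {ι : Type*} (t : I) (p q : ι → I) (i : ι) : I :=
  ⟨(1 - t) * p i + t * q i,
    convex_Icc (0 : ℝ) 1 (p i).2 (q i).2 (sub_nonneg.2 t.2.2) t.2.1 (by ring)⟩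

theorem continuous_cubeSegment {ι : Type*} :
    Continuous fun x : I × (ι → I) × (ι → I) => cubeSegment x.1 x.2.1 x.2.2 := by
  unfold cubeSegment
  fun_prop

@[simp]
theorem cubeSegment_zero {ι : Type*} (p q : ι → I) : cubeSegment 0 p q = p := by
  ext i; simp [cubeSegment]

@[simp]
theorem cubeSegment_one {ι : Type*} (p q : ι → I) : cubeSegment 1 p q = q := by
  ext i; simp [cubeSegment]

theorem dist_cubeSegment_le {ι : Type*} [Fintype ι] (t : I) (p q : ι → I) :
    dist p (cubeSegment t p q) ≤ dist p q := by
  refine (dist_pi_le_iff dist_nonneg).2 fun i => ?_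
  refine le_trans ?_ (dist_le_pi_dist p q i)
  rw [Subtype.dist_eq, Subtype.dist_eq, Real.dist_eq, Real.dist_eq]
  have : (p i : ℝ) - (cubeSegment t p q i : ℝ) = t * (p i - q i) := by
    simp only [cubeSegment]; ring
  rw [this, abs_mul, abs_of_nonneg t.2.1]
  exact mul_le_of_le_one_left (abs_nonneg _) t.2.2

theorem exists_entourageHomotopic_comp {ι X : Type*} [Fintype ι] [UniformSpace X]
    (f : C(ι → I, X)) {V : Set (X × X)} (hV : V ∈ 𝓤 X) :
    ∃ ε > 0, ∀ g : C(ι → I, ι → I), (∀ z, dist z (g z) < ε) →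
      EntourageHomotopic V f (f.comp g) := by
  have hf := CompactSpace.uniformContinuous_of_continuous f.continuous
  obtain ⟨ε, hε, h⟩ := Metric.mem_uniformity_dist.1 (hf hV)
  refine ⟨ε, hε, fun g hg => ⟨⟨⟨fun x => f (cubeSegment x.1 x.2 (g x.2)), ?_⟩, ?_, ?_⟩, ?_⟩⟩
  · exact f.continuous.comp (continuous_cubeSegment.comp
      (continuous_fst.prodMk (continuous_snd.prodMk (g.continuous.comp continuous_snd))))
  · simp
  · simp
  · exact fun t z => h ((dist_cubeSegment_le t z (g z)).trans_lt (hg z))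

namespace CanAvoidOn

variable {Z X : Type*} [TopologicalSpace Z] [UniformSpace X] {A : Set X}

theorem empty : CanAvoidOn A (∅ : Set Z) :=
  fun f _ hV => ⟨f, .refl hV f, by simp⟩

theorem mono {K L : Set Z} (h : CanAvoidOn A L) (hKL : K ⊆ L) : CanAvoidOn A K :=
  fun f V hV => (h f V hV).imp fun _ hg => ⟨hg.1, fun z hz => hg.2 z (hKL hz)⟩

theorem union {K L : Set Z} (hA : IsClosed A) (hKc : IsCompact K) (hK : CanAvoidOn A K)
    (hL : CanAvoidOn A L) : CanAvoidOn A (K ∪ L) := by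
  intro f V hV
  obtain ⟨V', hV', hVV⟩ := comp_mem_uniformity_sets hV
  obtain ⟨g, hfg, hg⟩ := hK f V' hV'
  obtain ⟨W, hW, hWA⟩ :=
      lebesgue_number_of_compact_open (hKc.image g.continuous) hA.isOpen_compl
    (Set.image_subset_iff.2 hg)
  obtain ⟨h, hgh, hh⟩ := hL g (V' ∩ W) (Filter.inter_mem hV' hW)
  refine ⟨h, (hfg.trans (hgh.mono Set.inter_subset_left) hV').mono hVV, ?_⟩
  rintro z (hz | hz)
  · exact hWA.2 _ ⟨z, hz, rfl⟩ (hgh.mem z).2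
  · exact hh z hz

theorem iUnion {κ : Type*} [Finite κ] {K : κ → Set Z} (hA : IsClosed A)
    (hKc : ∀ k, IsCompact (K k)) (hK : ∀ k, CanAvoidOn A (K k)) :
    CanAvoidOn A (⋃ k, K k) := by
  suffices ∀ s : Set κ, s.Finite → CanAvoidOn A (⋃ k ∈ s, K k) by
    simpa using this Set.univ Set.finite_univ
  intro s hs
  induction s, hs using Set.Finite.induction_on with
  | empty => simpa using empty
  | insert _ _ ih =>
    rw [Set.biUnion_insert]
    exact union hA (hKc _) (hK _) ih

/-- Homotopies on a compact set `Q` extend to a cube, up to small homotopies, along maps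
`c : Q → I^ι` and `r : I^ι → Q`. -/
theorem of_retraction {ι Q : Type*} [Fintype ι] [TopologicalSpace Q]
    (hQ : CanAvoidOn A (Set.univ : Set Q)) (c : C(Q, ι → I)) (r : C(ι → I, Q)) :
    CanAvoidOn A {z | c (r z) = z} := by
  intro f V hV
  obtain ⟨V', hV', hVV⟩ := comp_mem_uniformity_sets hV
  obtain ⟨ε, hε, hf⟩ := exists_entourageHomotopic_comp f hV'
  set d : (ι → I) → ℝ := fun z => dist z (c (r z)) with hd
  have hdc : Continuous d := by fun_prop
  set cut : ℝ → I := Set.projIcc 0 1 zero_le_one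
  have hcutc : Continuous cut := continuous_projIcc
  have hcut0 : ∀ x ≤ 0, cut x = 0 := fun x hx => Set.projIcc_of_le_left _ hx
  have hcut1 : ∀ x ≥ 1, cut x = 1 := fun x hx => Set.projIcc_of_right_le _ hx
  let g : C(ι → I, ι → I) :=
    ⟨fun z => cubeSegment (cut (2 - 3 * d z / ε)) z (c (r z)),
      continuous_cubeSegment.comp (Continuous.prodMk (hcutc.comp (by fun_prop))
        (continuous_id.prodMk (by fun_prop)))⟩
  have hgd : ∀ z, dist z (g z) < ε := by
    intro z
    by_cases hz : d z < ε
    · exact (dist_cubeSegment_le _ _ _).trans_lt hz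
    · have : 2 - 3 * d z / ε ≤ 0 := by
        rw [sub_nonpos, le_div_iff₀ hε]; linarith
      simp [g, hcut0 _ this, hε]
  have hg : ∀ z, d z ≤ ε / 3 → g z = c (r z) := by
    intro z hz
    have : 2 - 3 * d z / ε ≥ 1 := by
      rw [ge_iff_le, le_sub_comm, div_le_iff₀ hε]; linarith
    simp [g, hcut1 _ this]
  obtain ⟨k, ⟨H, hH⟩, hk⟩ := hQ (f.comp c) V' hV'
  let F : I × (ι → I) → X := fun x =>
    if d x.2 ≤ ε / 3 then H (x.1 * cut (1 - 3 * d x.2 / ε), r x.2) else f (g x.2)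
  have hFc : Continuous F := by
    refine continuous_if_le (by fun_prop) continuous_const (by fun_prop) (by fun_prop) ?_
    intro x hx
    have : 1 - 3 * d x.2 / ε ≤ 0 := by
      rw [sub_nonpos, le_div_iff₀ hε]; linarith
    simp [hcut0 _ this, hg x.2 hx.le]
  have hF0 : ∀ z, F (0, z) = f (g z) := by
    intro z
    by_cases hz : d z ≤ ε / 3
    · simp [F, hz, hg z hz]
    · simp [F, hz]
  refine ⟨⟨fun z => F (1, z), by fun_prop⟩,
    ((hf g hgd).trans (W := V') ⟨⟨⟨F, hFc⟩, hF0, fun _ => rfl⟩, ?_⟩ hV').mono hVV, ?_⟩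
  · intro t z
    change (f (g z), F (t, z)) ∈ V'
    by_cases hz : d z ≤ ε / 3
    · simpa [F, hz, hg z hz] using hH (t * cut (1 - 3 * d z / ε)) (r z)
    · simpa [F, hz] using refl_mem_uniformity hV'
  · intro z hz
    have hz0 : d z = 0 := by simp [hd, show c (r z) = z from hz]
    have : F (1, z) = k (r z) := by
      simp [F, hz0, hcut1, (div_pos hε three_pos).le]
    simpa [this] using hk (r z)

theorem face {ι κ : Type*} [Fintype κ] (e : ι → κ) (he : e.Injective)
    (hQ : CanAvoidOn A (Set.univ : Set (ι → I))) (v : κ → I) :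
    CanAvoidOn A {z : κ → I | ∀ i ∉ Set.range e, z i = v i} := by
  let c : C(ι → I, κ → I) := ⟨fun w => Function.extend e w v, by
    refine continuous_pi fun i => ?_
    by_cases hi : ∃ j, e j = i
    · obtain ⟨j, rfl⟩ := hi
      simpa [he.extend_apply] using continuous_apply j
    · simpa [Function.extend_apply' _ _ _ hi] using continuous_const⟩
  let r : C(κ → I, ι → I) := ⟨fun z => z ∘ e, by fun_prop⟩
  refine (of_retraction hQ c r).mono fun z hz => ?_
  funext i
  change Function.extend e (z ∘ e) v i = z i
  by_cases hi : ∃ j, e j = i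
  · obtain ⟨j, rfl⟩ := hi
    simp [he.extend_apply]
  · rw [Function.extend_apply' _ _ _ hi, hz i hi]

/-- Pushing off `A` on a skeleton of a grid. -/
theorem skeleton {n N : ℕ} (hA : IsClosed A) (hn : n ≤ N)
    (hQ : CanAvoidOn A (Set.univ : Set (Fin n → I))) {G : Set I} (hG : G.Finite) :
    CanAvoidOn A {z : Fin N → I | {i | z i ∉ G}.ncard ≤ n} := by
  have : Finite {v : Fin N → I | ∀ i, v i ∈ insert 0 G} :=
    (Set.Finite.pi' fun _ => hG.insert 0).to_subtype
  let K : (Fin n ↪ Fin N) × {v : Fin N → I | ∀ i, v i ∈ insert 0 G} → Set (Fin N → I) :=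
    fun k => {z | ∀ i ∉ Set.range k.1, z i = k.2.1 i}
  have hKc : ∀ k, IsCompact (K k) := fun k => by
    refine IsClosed.isCompact ?_
    simp only [K, Set.ofPred_forall]
    exact isClosed_iInter fun i => isClosed_iInter fun _ =>
      isClosed_eq (continuous_apply i) continuous_const
  refine (iUnion hA hKc fun k => face k.1 k.1.injective hQ _).mono fun z hz => ?_
  classical
  obtain ⟨T, hT, hTn⟩ := Finset.exists_superset_card_eq (s := {i | z i ∉ G}) (n := n)
    (by rwa [← Set.ncard_coe_finset, Finset.coe_filter_univ]) (by simpa using hn)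
  refine Set.mem_iUnion.2 ⟨(T.orderEmbOfFin hTn |>.toEmbedding,
    ⟨fun i => if z i ∈ G then z i else 0, fun i => ?_⟩), fun i hi => ?_⟩
  · by_cases h : z i ∈ G <;> simp [h]
  · have hiT : i ∉ T := by simpa using hi
    have : z i ∈ G := by
      by_contra h
      exact hiT (hT (by simpa using h))
    simp [this]

end CanAvoidOn

theorem IsHomotopicalZSet.canAvoidOn_univ {X : Type} [UniformSpace X] {n : ℕ} {A : Set X}
    (h : IsHomotopicalZSet n A) : CanAvoidOn A (Set.univ : Set (Fin n → I)) := by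
  intro f V hV
  obtain ⟨W, hW, hsymm, hWV⟩ := comp_symm_mem_uniformity_sets hV
  obtain ⟨g, hg, H, hH⟩ := h.2 (Set.range fun x => interior (UniformSpace.ball x W))
    (by rintro _ ⟨x, rfl⟩; exact isOpen_interior)
    (Set.eq_univ_of_forall fun x => ⟨_, ⟨x, rfl⟩,
      mem_interior_iff_mem_nhds.2 (UniformSpace.ball_mem_nhds x hW)⟩) f
  refine ⟨g, ⟨H, fun t z => ?_⟩, fun z _ => hg z⟩
  obtain ⟨_, ⟨x, rfl⟩, hx⟩ := hH z
  have hmem : ∀ t, H (t, z) ∈ UniformSpace.ball x W := fun t => interior_subset (hx t)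
  exact hWV ⟨x, hsymm.symm _ _ (by simpa [UniformSpace.ball] using hmem 0), hmem t⟩

/-- A small perturbation of the interval moves every point whose fractional part, at scale `k`,
is sent to `0`, `1 / 2` or `1` into a finite grid. -/
theorem exists_perturbation_mem_grid {ψ : ℝ → ℝ} (hψ : Continuous ψ) (h01 : ψ 0 = ψ 1)
    (hb : ∀ s ∈ Set.Icc (0 : ℝ) 1, |ψ s| ≤ 1) {k : ℕ} (hk : 0 < k) :
    ∃ g : C(I, I), ∃ G : Set I, G.Finite ∧ (∀ x, dist x (g x) ≤ 1 / k) ∧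
      ∀ x : I, (∃ j ∈ Set.Icc (0 : ℤ) 2,
        Int.fract (k * x : ℝ) + ψ (Int.fract (k * x : ℝ)) = j / 2) → g x ∈ G := by
  have hk' : (0 : ℝ) < k := by exact_mod_cast hk
  have hc : Continuous (ψ ∘ Int.fract) := hψ.continuousOn.comp_fract'' h01
  let p : ℝ → I := Set.projIcc 0 1 zero_le_one
  refine ⟨⟨fun x => p ((k * x + (ψ ∘ Int.fract) (k * x : ℝ)) / k),
    continuous_projIcc.comp
      (Continuous.div_const (.add (by fun_prop) (hc.comp (by fun_prop))) _)⟩,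
    (fun j : ℤ => p (j / (2 * k))) '' Set.Icc 0 (2 * k + 2),
    (Set.finite_Icc _ _).image _, fun x => ?_, ?_⟩
  · have hx : x = p x := (Set.projIcc_val _ x).symm
    calc dist x (p ((k * x + (ψ ∘ Int.fract) (k * x : ℝ)) / k))
        = dist (p x) (p ((k * x + (ψ ∘ Int.fract) (k * x : ℝ)) / k)) := by rw [← hx]
      _ ≤ dist (x : ℝ) ((k * x + (ψ ∘ Int.fract) (k * x : ℝ)) / k) := by
        simpa using (LipschitzWith.projIcc (zero_le_one (α := ℝ))).dist_le_mul _ _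
      _ = |ψ (Int.fract (k * x : ℝ))| / k := by
        rw [dist_comm, Real.dist_eq, ← abs_of_pos hk', ← abs_div, abs_of_pos hk']
        congr 1
        simp only [Function.comp]
        field_simp
        ring
      _ ≤ 1 / k := by
        gcongr
        exact hb _ ⟨Int.fract_nonneg _, (Int.fract_lt_one _).le⟩
  · rintro x ⟨j, ⟨hj0, hj2⟩, hj⟩
    have h0 : 0 ≤ ⌊(k * x : ℝ)⌋ := Int.floor_nonneg.2 (mul_nonneg hk'.le x.2.1)
    have h1 : ⌊(k * x : ℝ)⌋ ≤ k := by
      have : (k * x : ℝ) ≤ (k : ℤ) := by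
        simpa using mul_le_of_le_one_right hk'.le x.2.2
      exact_mod_cast (Int.floor_le _).trans this
    refine ⟨2 * ⌊(k * x : ℝ)⌋ + j, ⟨by omega, by omega⟩, ?_⟩
    change p _ = p _
    congr 1
    have := Int.floor_add_fract (k * x : ℝ)
    rw [Function.comp, show (k * x : ℝ) + ψ (Int.fract (k * x : ℝ)) =
      ⌊(k * x : ℝ)⌋ + j / 2 by linarith]
    push_cast
    field_simp

/-- Two small perturbations of the interval with finite grids such that every point
is moved into a grid by one of them. -/
theorem exists_complementary_perturbations {ε : ℝ} (hε : 0 < ε) :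
    ∃ g g' : C(I, I), ∃ G G' : Set I, G.Finite ∧ G'.Finite ∧ (∀ x, dist x (g x) < ε) ∧
      (∀ x, dist x (g' x) < ε) ∧ ∀ x, g x ∈ G ∨ g' x ∈ G' := by
  obtain ⟨k, hk⟩ := exists_nat_one_div_lt hε
  have hk' : 1 / ((k + 1 : ℕ) : ℝ) < ε := by exact_mod_cast hk
  obtain ⟨g, G, hG, hg, hgG⟩ := exists_perturbation_mem_grid
    (ψ := fun s => max 0 (min 1 (2 * s - 1 / 2)) - s) (by fun_prop) (by norm_num)
    (by
      rintro s ⟨h0, h1⟩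
      rw [abs_le]
      constructor
      · linarith [le_max_left 0 (min 1 (2 * s - 1 / 2))]
      · linarith [max_le zero_le_one (min_le_left 1 (2 * s - 1 / 2))]) k.succ_pos
  obtain ⟨g', G', hG', hg', hgG'⟩ := exists_perturbation_mem_grid
    (ψ := fun s => max (min (2 * s) (1 / 2)) (2 * s - 1) - s) (by fun_prop) (by norm_num)
    (by
      rintro s ⟨h0, h1⟩
      rw [abs_le]
      constructor
      · linarith [le_max_right (min (2 * s) (1 / 2)) (2 * s - 1)]
      · linarith [max_le ((min_le_right (2 * s) (1 / 2)).trans (by norm_num))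
          (show 2 * s - 1 ≤ 1 by linarith)]) k.succ_pos
  refine ⟨g, g', G, G', hG, hG', fun x => (hg x).trans_lt hk', fun x => (hg' x).trans_lt hk',
    fun x => ?_⟩
  set s := Int.fract (((k + 1 : ℕ) : ℝ) * x) with hs
  by_cases h1 : s ≤ 1 / 4
  · refine .inl (hgG x ⟨0, by simp, ?_⟩)
    simp only [← hs]
    rw [max_eq_left ((min_le_right _ _).trans (by linarith))]
    simp
  by_cases h2 : 3 / 4 ≤ s
  · refine .inl (hgG x ⟨2, by simp, ?_⟩)
    simp only [← hs]
    rw [min_eq_left (by linarith), max_eq_right zero_le_one]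
    simp
  · refine .inr (hgG' x ⟨1, by simp, ?_⟩)
    simp only [← hs]
    rw [min_eq_right (by linarith), max_eq_left (by linarith)]
    simp

/-- After a small perturbation `g` of the coordinates, a map on a cube can be pushed off a
homotopical `Z_n`-set at all points with at most `n` coordinates moved off a finite grid. -/
theorem IsHomotopicalZSet.exists_avoiding {X : Type} [UniformSpace X] {n N : ℕ} {A : Set X}
    (hA : IsHomotopicalZSet n A) (hn : n ≤ N) (f : C(Fin N → I, X)) {V : Set (X × X)}
    (hV : V ∈ 𝓤 X) :
    ∃ ε > 0, ∀ g : C(I, I), (∀ x, dist x (g x) < ε) → ∀ G : Set I, G.Finite →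
      ∃ f', EntourageHomotopic V f f' ∧
        ∀ z : Fin N → I, {i | g (z i) ∉ G}.ncard ≤ n → f' z ∉ A := by
  obtain ⟨V', hV', hVV⟩ := comp_mem_uniformity_sets hV
  obtain ⟨ε, hε, hf⟩ := exists_entourageHomotopic_comp f hV'
  refine ⟨ε, hε, fun g hg G hG => ?_⟩
  obtain ⟨h, hfh, hh⟩ := CanAvoidOn.skeleton hA.1 hn hA.canAvoidOn_univ hG f V' hV'
  let γ : C(Fin N → I, Fin N → I) := ⟨fun z i => g (z i), by fun_prop⟩
  exact ⟨h.comp γ, ((hf γ fun z => (dist_pi_lt_iff hε).2 fun i => hg _).trans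
    (hfh.comp_right γ) hV').mono hVV, fun z hz => hh (γ z) hz⟩

/-- Multiplication theorem for homotopical `Z_n`-sets: if `A` is a homotopical `Z_n`-set in a
Tychonov space `X` and `B` is a homotopical `Z_m`-set in a Tychonov space `Y`, then `A × B` is
a homotopical `Z_{n+m+1}`-set in `X × Y`. -/
theorem stmt17 {X Y : Type} [TopologicalSpace X] [TopologicalSpace Y]
    [T35Space X] [T35Space Y] (n m : ℕ) (A : Set X) (B : Set Y)
    (hA : IsHomotopicalZSet n A) (hB : IsHomotopicalZSet m B) :
    IsHomotopicalZSet (n + m + 1) (A ×ˢ B) := by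
  obtain ⟨uX, rfl⟩ := CompletelyRegularSpace.exists_uniformSpace (X := X)
  obtain ⟨uY, rfl⟩ := CompletelyRegularSpace.exists_uniformSpace (X := Y)
  refine ⟨hA.1.prod hB.1, fun 𝒰 hopen hcover f => ?_⟩
  obtain ⟨V, hV, hVU⟩ := lebesgue_number_lemma_sUnion (isCompact_range f.continuous) hopen
    (hcover ▸ Set.subset_univ _)
  rw [uniformity_prod, Filter.mem_inf_iff_superset] at hV
  obtain ⟨_, ⟨V₁, hV₁, hV₁'⟩, _, ⟨V₂, hV₂, hV₂'⟩, hVV⟩ := hV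
  obtain ⟨ε₁, hε₁, h₁⟩ := hA.exists_avoiding (show n ≤ n + m + 1 by omega)
    (ContinuousMap.fst.comp f) hV₁
  obtain ⟨ε₂, hε₂, h₂⟩ := hB.exists_avoiding (show m ≤ n + m + 1 by omega)
    (ContinuousMap.snd.comp f) hV₂
  obtain ⟨g, g', G, G', hG, hG', hg, hg', hGG⟩ :=
    exists_complementary_perturbations (lt_min hε₁ hε₂)
  obtain ⟨f₁, ⟨H₁, hH₁⟩, hf₁⟩ := h₁ g (fun x => (hg x).trans_le (min_le_left _ _)) G hG
  obtain ⟨f₂, ⟨H₂, hH₂⟩, hf₂⟩ := h₂ g' (fun x => (hg' x).trans_le (min_le_right _ _)) G' hG'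
  refine ⟨f₁.prodMk f₂, fun z hz => ?_, H₁.prodMk H₂, fun z => ?_⟩
  · have hn : n < {i | g (z i) ∉ G}.ncard := not_le.1 fun h => hf₁ z h hz.1
    have hm : m < {i | g' (z i) ∉ G'}.ncard := not_le.1 fun h => hf₂ z h hz.2
    have hdisj : Disjoint {i | g (z i) ∉ G} {i | g' (z i) ∉ G'} :=
      Set.disjoint_left.2 fun i hi hi' => (hGG (z i)).elim hi hi'
    have := Set.ncard_union_eq hdisj
    have := Set.ncard_le_card ({i | g (z i) ∉ G} ∪ {i | g' (z i) ∉ G'})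
    simp only [Nat.card_eq_fintype_card, Fintype.card_fin] at this
    omega
  · obtain ⟨U, hU, hVU⟩ := hVU (f z) ⟨z, rfl⟩
    exact ⟨U, hU, fun t => hVU (hVV ⟨hV₁' (hH₁ t z), hV₂' (hH₂ t z)⟩)⟩
end
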